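/- Let G be a countable group. The set Λ_G of traces on G satisfying Lück's condition is closed in the set of all traces on G for the topology of pointwise convergence on G. -/

import Mathlib

open scoped ComplexOrder ENNReal
open Filter Topology Matrix

set_option synthInstance.maxHeartbeats 1000000
set_option maxHeartbeats 1000000

noncomputable section

instance piLpCompleteSpace {ι : Type*} [Fintype ι] (p : ℝ≥0∞) (β : ι → Type*)
    [∀ i, UniformSpace (β i)] [∀ i, CompleteSpace (β i)] : CompleteSpace (PiLp p β) :=
  inferInstance

/-- `φ : G → ℂ` is of positive type: for every finite family `g₁, …, g_m` of elements of
`G`, the matrix `(φ (gᵢ⁻¹ gⱼ))_{i,j}` is positive semidefinite. -/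
def IsPosType {G : Type*} [Group G] (φ : G → ℂ) : Prop :=
  ∀ (m : ℕ) (g : Fin m → G), (Matrix.of fun i j => φ ((g i)⁻¹ * g j)).PosSemidef

/-- A trace on a (discrete) group: a function of positive type, constant on conjugacy
classes. -/
def IsGroupTrace {G : Type*} [Group G] (φ : G → ℂ) : Prop :=
  IsPosType φ ∧ ∀ g h : G, φ (h * g * h⁻¹) = φ g

/-- GNS representation data for a function `φ` on a group `G`: a Hilbert space `H`, a
unital algebra morphism `π` from `ℂG = MonoidAlgebra ℂ G` to the bounded operators on `H`
sending group elements to unitaries (this is the condition `star_of`), and a cyclic vector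
`ξ` whose matrix coefficient is (the linear extension of) `φ`. -/
structure GNSRep (G : Type*) [Group G] (φ : G → ℂ) where
  H : Type
  [instNormed : NormedAddCommGroup H]
  [instInner : InnerProductSpace ℂ H]
  [instComplete : CompleteSpace H]
  π : MonoidAlgebra ℂ G →ₐ[ℂ] (H →L[ℂ] H)
  ξ : H
  star_of : ∀ g : G, star (π (MonoidAlgebra.of ℂ G g)) = π (MonoidAlgebra.of ℂ G g⁻¹)
  inner_eq : ∀ g : G, (inner ℂ ξ (π (MonoidAlgebra.of ℂ G g) ξ) : ℂ) = φ g
  cyclic : Dense (Set.range fun x : MonoidAlgebra ℂ G => π x ξ)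

attribute [instance] GNSRep.instNormed GNSRep.instInner GNSRep.instComplete

/-- The vector `ξᵢ ∈ Hⁿ`: the cyclic vector `ξ` in the `i`-th summand, `0` elsewhere. -/
def GNSRep.vec {G : Type*} [Group G] {φ : G → ℂ} (R : GNSRep G φ) {n : ℕ} (i : Fin n) :
    PiLp 2 (fun _ : Fin n => R.H) :=
  (PiLp.continuousLinearEquiv 2 ℂ (fun _ : Fin n => R.H)).symm (Pi.single i R.ξ)

/-- `|x| = (x* x)^{1/2}`, via the continuous functional calculus. -/
def cfcAbs {A : Type*} [CStarAlgebra A] (x : A) : A := cfc Real.sqrt (star x * x)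

/-- The set of continuous majorants of `ln₊` on `[0,∞)`.  (Recall that `Real.log 0 = 0`,
so that `Real.log` agrees with `ln₊` on `[0,∞)`.) -/
def lnPlusMajorants : Set (ℝ → ℝ) :=
  {g | ContinuousOn g (Set.Ici 0) ∧ ∀ t ∈ Set.Ici (0:ℝ), Real.log t ≤ g t}

/-- The action of a matrix `a ∈ Mₙ(R)` on the Hilbert space `H'ⁿ` (with its `ℓ²` inner
product) induced by a morphism `π : R → B(H')`: `(π_n(a) v)_i = Σ_j π(a i j) (v j)`. -/
def matAct {R H' : Type*} [Ring R] [Algebra ℂ R] [NormedAddCommGroup H']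
    [InnerProductSpace ℂ H'] {n : ℕ}
    (π : R →ₐ[ℂ] (H' →L[ℂ] H')) (a : Matrix (Fin n) (Fin n) R) :
    PiLp 2 (fun _ : Fin n => H') →L[ℂ] PiLp 2 (fun _ : Fin n => H') :=
  (PiLp.continuousLinearEquiv 2 ℂ _).symm.toContinuousLinearMap ∘L
    (ContinuousLinearMap.pi fun i => ∑ j, (π (a i j)).comp (ContinuousLinearMap.proj j)) ∘L
    (PiLp.continuousLinearEquiv 2 ℂ _).toContinuousLinearMap

/-- `(φ ⊗ Trₙ)(ln₊ |a|) := inf { Σᵢ ⟨ξᵢ, g(|π(a)|) ξᵢ⟩ : g : [0,∞) → ℝ continuous, g ≥ ln₊ }`,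
an element of `ℝ ∪ {−∞}`, computed in the GNS representation `R`. -/
def GNSRep.lnPlusQ {G : Type*} [Group G] {φ : G → ℂ} (R : GNSRep G φ) {n : ℕ}
    (a : Matrix (Fin n) (Fin n) (MonoidAlgebra ℂ G)) : EReal :=
  ⨅ g ∈ lnPlusMajorants,
    ((∑ i, (inner ℂ (R.vec i) (cfc g (cfcAbs (matAct R.π a)) (R.vec i)) : ℂ)).re : EReal)

/-- A function `φ` on `G` satisfies Lück's condition if `(φ ⊗ Trₙ)(ln₊|a|) ≥ 0` for every
`n ≥ 1` and every `a ∈ Mₙ(ℤG)` (an `a ∈ Mₙ(ℂG)` whose coefficients are all integers),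
where the quantity is computed in any GNS representation of `φ`. -/
def SatisfiesLueck {G : Type*} [Group G] (φ : G → ℂ) : Prop :=
  ∀ (n : ℕ), 0 < n → ∀ a : Matrix (Fin n) (Fin n) (MonoidAlgebra ℂ G),
    (∀ (i j : Fin n) (g : G), ∃ m : ℤ, (a i j).coeff g = (m : ℂ)) →
    ∀ R : GNSRep G φ, 0 ≤ R.lnPlusQ a

/-!
Fix `a ∈ Mₙ(ℂG)` and a continuous function `g` on `[0, ∞)`. The norm of `π_φ(a* a)` is bounded by
the `ℓ¹`-norm of the entries of `a* a`, independently of `φ`, so by Weierstrass there is one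
polynomial `p` with `g(|π_φ(a)|)` uniformly close to `π_φ(p(a* a))` for all `φ`. Hence
`φ ↦ (φ ⊗ Trₙ)(g(|a|))` is, where `φ(1)` stays bounded, a uniform limit of the functions
`φ ↦ φ(Trₙ p(a* a))`, which depend on finitely many values of `φ`; it is therefore continuous.
As an infimum of such functions, `φ ↦ (φ ⊗ Trₙ)(ln₊|a|)` is upper semicontinuous, so the set where
it is nonnegative is closed. Since the condition is phrased through GNS representations, every
function of positive type must be shown to have one.
-/

section GroupAlgebra

open MulOpposite

variable {k G : Type*} [CommSemiring k]

section Star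

variable [StarRing k] [Group G]

/-- The involution `∑ c_g g ↦ ∑ c̄_g g⁻¹` of the group algebra, as a ring homomorphism to the
opposite algebra. -/
def groupAlgebraStarHom : MonoidAlgebra k G →+* (MonoidAlgebra k G)ᵐᵒᵖ :=
  MonoidAlgebra.liftNCRingHom
    ((algebraMap k (MonoidAlgebra k G)ᵐᵒᵖ).comp (starRingEnd k))
    ((MonoidAlgebra.of k G).op.comp (MulEquiv.inv' G).toMonoidHom)
    fun c _ => Algebra.commutes (starRingEnd k c) _

theorem unop_groupAlgebraStarHom_single (g : G) (c : k) :
    unop (groupAlgebraStarHom (MonoidAlgebra.single g c)) = MonoidAlgebra.single g⁻¹ (star c) := by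
  simp [groupAlgebraStarHom, MonoidAlgebra.liftNCRingHom, MonoidAlgebra.single_mul_single,
    starRingEnd_apply]

/-- The star ring structure of the group algebra, with `g* = g⁻¹` for `g ∈ G`. -/
instance groupAlgebraStarRing : StarRing (MonoidAlgebra k G) where
  star x := unop (groupAlgebraStarHom x)
  star_involutive x := by
    induction x using MonoidAlgebra.induction_linear with
    | zero => simp
    | add x y hx hy => simp_all only [map_add, unop_add]
    | single g c => simp [unop_groupAlgebraStarHom_single]
  star_mul x y := by rw [map_mul, unop_mul]
  star_add x y := by rw [map_add, unop_add]

theorem groupAlgebra_star_single (g : G) (c : k) :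
    star (MonoidAlgebra.single g c) = MonoidAlgebra.single g⁻¹ (star c) :=
  unop_groupAlgebraStarHom_single g c

instance groupAlgebraStarModule : StarModule k (MonoidAlgebra k G) where
  star_smul c x := by
    induction x using MonoidAlgebra.induction_linear with
    | zero => simp
    | add x y hx hy => simp only [smul_add, star_add, hx, hy]
    | single g d => simp [groupAlgebra_star_single]

end Star

/-- The linear extension `∑ c_g g ↦ ∑ c_g φ(g)` of a function on a group to its group algebra. -/
def groupAlgebraExtend (φ : G → k) : MonoidAlgebra k G →ₗ[k] k :=
  Finsupp.linearCombination k φ ∘ₗ (MonoidAlgebra.coeffLinearEquiv k).toLinearMap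

theorem groupAlgebraExtend_apply (φ : G → k) (x : MonoidAlgebra k G) :
    groupAlgebraExtend φ x = x.coeff.sum fun g c => c * φ g :=
  rfl

@[simp]
theorem groupAlgebraExtend_single (φ : G → k) (g : G) (c : k) :
    groupAlgebraExtend φ (MonoidAlgebra.single g c) = c * φ g := by
  simp [groupAlgebraExtend_apply]

theorem continuous_groupAlgebraExtend [TopologicalSpace k]
    [IsTopologicalSemiring k] (x : MonoidAlgebra k G) :
    Continuous fun φ : G → k => groupAlgebraExtend φ x := by
  simp only [groupAlgebraExtend_apply, Finsupp.sum]
  fun_prop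

theorem groupAlgebraExtend_star_mul_self [StarRing k] [Group G] (φ : G → k)
    (x : MonoidAlgebra k G) :
    groupAlgebraExtend φ (star x * x) =
      ∑ g ∈ x.coeff.support, ∑ h ∈ x.coeff.support,
        star (x.coeff g) * (φ (g⁻¹ * h) * x.coeff h) := by
  nth_rw 1 2 [← MonoidAlgebra.sum_coeff_single x]
  simp only [Finsupp.sum, star_sum, Finset.sum_mul_sum, map_sum, groupAlgebra_star_single,
    MonoidAlgebra.single_mul_single, groupAlgebraExtend_single]
  exact Finset.sum_congr rfl fun g _ => Finset.sum_congr rfl fun h _ => by ring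

end GroupAlgebra

section PositiveType

variable {G : Type*} [Group G] {φ : G → ℂ}

theorem IsPosType.map_inv (hφ : IsPosType φ) (g : G) : φ g⁻¹ = star (φ g) := by
  simpa using ((hφ 2 ![g, 1]).isHermitian.apply 0 1).symm

theorem IsPosType.groupAlgebraExtend_star (hφ : IsPosType φ) (x : MonoidAlgebra ℂ G) :
    groupAlgebraExtend φ (star x) = star (groupAlgebraExtend φ x) := by
  induction x using MonoidAlgebra.induction_linear with
  | zero => simp
  | add x y hx hy => simp only [star_add, map_add, hx, hy]
  | single g c => simp [groupAlgebra_star_single, hφ.map_inv]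

theorem IsPosType.groupAlgebraExtend_star_mul_self_nonneg (hφ : IsPosType φ)
    (x : MonoidAlgebra ℂ G) : 0 ≤ groupAlgebraExtend φ (star x * x) := by
  let e := x.coeff.support.equivFin
  have reindex (f : G → ℂ) : ∑ g ∈ x.coeff.support, f g = ∑ i, f (e.symm i) :=
    ((e.symm.sum_comp fun g => f g).trans (Finset.sum_coe_sort _ f)).symm
  have h := (hφ _ fun i => (e.symm i : G)).dotProduct_mulVec_nonneg fun i => x.coeff (e.symm i)
  simpa only [groupAlgebraExtend_star_mul_self, reindex, dotProduct, Matrix.mulVec,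
    Pi.star_apply, Matrix.of_apply, Finset.mul_sum] using h

end PositiveType

section GNSConstruction

open UniformSpace

variable {G : Type*} [Group G] {φ : G → ℂ}

/-- The group algebra `ℂG` carrying the semi-inner product `⟨x, y⟩ = φ(x* y)`. -/
def PreGNS (_ : IsPosType φ) : Type _ :=
  MonoidAlgebra ℂ G

namespace PreGNS

variable (hφ : IsPosType φ)

instance : AddCommGroup (PreGNS hφ) := inferInstanceAs (AddCommGroup (MonoidAlgebra ℂ G))

instance : Module ℂ (PreGNS hφ) := inferInstanceAs (Module ℂ (MonoidAlgebra ℂ G))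

/-- The identity, as a map from the group algebra to its type synonym `PreGNS hφ`. -/
def ofGroupAlgebra : MonoidAlgebra ℂ G ≃ₗ[ℂ] PreGNS hφ :=
  LinearEquiv.refl ℂ _

/-- The semi-inner product `⟨x, y⟩ = φ(x* y)`, antilinear in `x`. -/
instance core : PreInnerProductSpace.Core ℂ (PreGNS hφ) where
  inner x y :=
    groupAlgebraExtend φ (star ((ofGroupAlgebra hφ).symm x) * (ofGroupAlgebra hφ).symm y)
  conj_inner_symm x y := by
    rw [starRingEnd_apply, ← hφ.groupAlgebraExtend_star, star_mul, star_star]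
  re_inner_nonneg x := (Complex.le_def.1 (hφ.groupAlgebraExtend_star_mul_self_nonneg _)).1
  add_left x y z := by rw [map_add, star_add, add_mul, map_add]
  smul_left x y c := by simp [star_smul]

instance : SeminormedAddCommGroup (PreGNS hφ) :=
  InnerProductSpace.Core.toSeminormedAddCommGroup (𝕜 := ℂ)

instance : InnerProductSpace ℂ (PreGNS hφ) :=
  .ofCore _

theorem inner_ofGroupAlgebra (x y : MonoidAlgebra ℂ G) :
    inner ℂ (ofGroupAlgebra hφ x) (ofGroupAlgebra hφ y) = groupAlgebraExtend φ (star x * y) :=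
  rfl

/-- Left translation by a group element, an isometry of the pre-Hilbert space `PreGNS hφ`. -/
def leftMul (g : G) : PreGNS hφ →ₗᵢ[ℂ] PreGNS hφ :=
  ((ofGroupAlgebra hφ).toLinearMap ∘ₗ LinearMap.mulLeft ℂ (MonoidAlgebra.of ℂ G g) ∘ₗ
    (ofGroupAlgebra hφ).symm.toLinearMap).isometryOfInner fun x y => by
      obtain ⟨x, rfl⟩ := (ofGroupAlgebra hφ).surjective x
      obtain ⟨y, rfl⟩ := (ofGroupAlgebra hφ).surjective y
      simp [inner_ofGroupAlgebra, groupAlgebra_star_single, mul_assoc,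
        ← mul_assoc (MonoidAlgebra.single g⁻¹ _), MonoidAlgebra.single_mul_single,
        ← MonoidAlgebra.one_def]

theorem leftMul_ofGroupAlgebra (g : G) (x : MonoidAlgebra ℂ G) :
    leftMul hφ g (ofGroupAlgebra hφ x) = ofGroupAlgebra hφ (MonoidAlgebra.of ℂ G g * x) :=
  rfl

theorem leftMul_one (x : PreGNS hφ) : leftMul hφ 1 x = x := by
  obtain ⟨x, rfl⟩ := (ofGroupAlgebra hφ).surjective x
  rw [leftMul_ofGroupAlgebra, map_one, one_mul]

theorem leftMul_mul (g h : G) (x : PreGNS hφ) :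
    leftMul hφ (g * h) x = leftMul hφ g (leftMul hφ h x) := by
  obtain ⟨x, rfl⟩ := (ofGroupAlgebra hφ).surjective x
  simp only [leftMul_ofGroupAlgebra, map_mul, mul_assoc]

/-- The representation of `G` by left translations on the Hilbert space completion. -/
def translation : G →* (Completion (PreGNS hφ) →L[ℂ] Completion (PreGNS hφ)) where
  toFun g := (leftMul hφ g).toContinuousLinearMap.completion
  map_one' := by
    ext x
    induction x using Completion.induction_on with
    | hp => exact isClosed_eq (by fun_prop) (by fun_prop)
    | ih x => simp [leftMul_one]
  map_mul' g h := by
    ext x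
    induction x using Completion.induction_on with
    | hp => exact isClosed_eq (by fun_prop) (by fun_prop)
    | ih x => simp [leftMul_mul]

theorem translation_coe (g : G) (x : PreGNS hφ) :
    translation hφ g (x : Completion (PreGNS hφ)) = (leftMul hφ g x : PreGNS hφ) := by
  simp [translation]

theorem inner_translation (g : G) (x y : Completion (PreGNS hφ)) :
    inner ℂ (translation hφ g x) (translation hφ g y) = inner ℂ x y := by
  induction x, y using Completion.induction_on₂ with
  | hp => exact isClosed_eq (by fun_prop) (by fun_prop)
  | ih x y => simp [translation_coe]

theorem star_translation (g : G) : star (translation hφ g) = translation hφ g⁻¹ := by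
  symm
  rw [ContinuousLinearMap.star_eq_adjoint, ContinuousLinearMap.eq_adjoint_iff]
  intro x y
  rw [← inner_translation hφ g, ← mul_apply_eq_comp, ← map_mul, mul_inv_cancel, map_one,
    one_apply_eq_self]

theorem lift_translation_apply_one (x : MonoidAlgebra ℂ G) :
    MonoidAlgebra.lift ℂ _ G (translation hφ) x (ofGroupAlgebra hφ 1 : PreGNS hφ) =
      (ofGroupAlgebra hφ x : PreGNS hφ) := by
  induction x using MonoidAlgebra.induction_linear with
  | zero => simp [Completion.coe_zero]
  | add x y hx hy => simp only [map_add, _root_.add_apply, hx, hy, Completion.coe_add]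
  | single g c =>
    rw [MonoidAlgebra.lift_single, _root_.smul_apply, translation_coe, leftMul_ofGroupAlgebra,
      ← Completion.coe_smul, ← map_smul, mul_one, MonoidAlgebra.smul_of]

end PreGNS

namespace GNSRep

/-- The GNS representation of a function of positive type, on the completion of `PreGNS hφ`. The
group lives in `Type` because `GNSRep` asks for a Hilbert space there. -/
def ofIsPosType {G : Type} [Group G] {φ : G → ℂ} (hφ : IsPosType φ) : GNSRep G φ where
  H := Completion (PreGNS hφ)
  π := MonoidAlgebra.lift ℂ _ G (PreGNS.translation hφ)
  ξ := (PreGNS.ofGroupAlgebra hφ 1 : PreGNS hφ)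
  star_of g := by simp only [MonoidAlgebra.lift_of, PreGNS.star_translation]
  inner_eq g := by
    rw [PreGNS.lift_translation_apply_one, Completion.inner_coe, PreGNS.inner_ofGroupAlgebra]
    simp
  cyclic := by
    simp only [PreGNS.lift_translation_apply_one]
    exact (Completion.denseRange_coe (α := PreGNS hφ)).comp
      (PreGNS.ofGroupAlgebra hφ).surjective.denseRange (Completion.continuous_coe _)

/-- Pullback of a GNS representation along a group isomorphism. -/
def comapEquiv {K : Type*} [Group K] {ψ : K → ℂ} (R : GNSRep K ψ) (e : G ≃* K) :
    GNSRep G (ψ ∘ e) where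
  H := R.H
  π := R.π.comp (MonoidAlgebra.domCongr ℂ ℂ e).toAlgHom
  ξ := R.ξ
  star_of g := by simpa using R.star_of (e g)
  inner_eq g := by simpa using R.inner_eq (e g)
  cyclic := by
    have h := R.cyclic
    rwa [← (MonoidAlgebra.domCongr ℂ ℂ e).surjective.range_comp] at h

end GNSRep

theorem IsPosType.comp_mulEquiv {K : Type*} [Group K] {ψ : K → ℂ} (hψ : IsPosType ψ)
    (e : G ≃* K) : IsPosType (ψ ∘ e) := fun m g => by
  simpa using hψ m (e ∘ g)

theorem IsPosType.nonempty_gnsRep [Small.{0} G] (hφ : IsPosType φ) : Nonempty (GNSRep G φ) := by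
  let e : Shrink.{0} G ≃* G := Shrink.mulEquiv
  have h : φ = (φ ∘ e) ∘ e.symm := by ext; simp
  rw [h]
  exact ⟨(GNSRep.ofIsPosType (hφ.comp_mulEquiv e)).comapEquiv e.symm⟩

end GNSConstruction

namespace GNSRep

variable {G : Type*} [Group G] {φ : G → ℂ} (R : GNSRep G φ)

theorem π_star (x : MonoidAlgebra ℂ G) : R.π (star x) = star (R.π x) := by
  induction x using MonoidAlgebra.induction_linear with
  | zero => simp
  | add x y hx hy => simp only [star_add, map_add, hx, hy]
  | single g c =>
    rw [groupAlgebra_star_single, ← MonoidAlgebra.smul_of, ← MonoidAlgebra.smul_of, map_smul,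
      map_smul, star_smul, R.star_of]

theorem inner_π (x : MonoidAlgebra ℂ G) :
    inner ℂ R.ξ (R.π x R.ξ) = groupAlgebraExtend φ x := by
  induction x using MonoidAlgebra.induction_linear with
  | zero => simp
  | add x y hx hy => simp only [map_add, _root_.add_apply, inner_add_right, hx, hy]
  | single g c =>
    rw [groupAlgebraExtend_single, ← MonoidAlgebra.smul_of, map_smul, _root_.smul_apply,
      inner_smul_right, R.inner_eq]

theorem norm_ξ_sq : ‖R.ξ‖ ^ 2 = ‖φ 1‖ := by
  rw [← R.inner_eq 1, map_one, map_one, one_apply_eq_self, inner_self_eq_norm_sq_to_K]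
  simp

theorem norm_π_of_le (g : G) : ‖R.π (MonoidAlgebra.of ℂ G g)‖ ≤ 1 := by
  have isometry : ∀ v, ‖R.π (MonoidAlgebra.of ℂ G g) v‖ = ‖v‖ := by
    rw [ContinuousLinearMap.norm_map_iff_adjoint_comp_self, ← ContinuousLinearMap.star_eq_adjoint,
      R.star_of, ← ContinuousLinearMap.mul_def, ← map_mul, ← map_mul, inv_mul_cancel, map_one,
      map_one]
  exact ContinuousLinearMap.opNorm_le_bound _ zero_le_one fun v => by rw [isometry, one_mul]

theorem norm_π_le (x : MonoidAlgebra ℂ G) : ‖R.π x‖ ≤ x.coeff.sum fun _ c => ‖c‖ := by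
  nth_rw 1 [← MonoidAlgebra.sum_coeff_single x]
  rw [Finsupp.sum, Finsupp.sum, map_sum]
  refine norm_sum_le_of_le _ fun g _ => ?_
  rw [← MonoidAlgebra.smul_of, map_smul, norm_smul]
  exact mul_le_of_le_one_right (norm_nonneg _) (R.norm_π_of_le g)

end GNSRep

section MatrixAction

theorem norm_piLp_two_le_sum {ι : Type*} [Fintype ι] {β : ι → Type*}
    [∀ i, SeminormedAddCommGroup (β i)] (v : PiLp 2 β) : ‖v‖ ≤ ∑ i, ‖v i‖ := by
  rw [PiLp.norm_eq_of_L2, Real.sqrt_le_left (by positivity)]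
  exact Finset.sum_sq_le_sq_sum_of_nonneg fun i _ => norm_nonneg _

variable {A E : Type*} [Ring A] [Algebra ℂ A] [NormedAddCommGroup E] [InnerProductSpace ℂ E]
  {n : ℕ} (π : A →ₐ[ℂ] (E →L[ℂ] E))

theorem matAct_apply (a : Matrix (Fin n) (Fin n) A) (v : PiLp 2 fun _ : Fin n => E) (i : Fin n) :
    matAct π a v i = ∑ j, π (a i j) (v j) := by
  simp [matAct]

/-- The action of matrices over `A` on `Eⁿ` as an algebra homomorphism. -/
def matActHom : Matrix (Fin n) (Fin n) A →ₐ[ℂ]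
    ((PiLp 2 fun _ : Fin n => E) →L[ℂ] (PiLp 2 fun _ : Fin n => E)) :=
  AlgHom.ofLinearMap
    { toFun := matAct π
      map_add' a b := by ext v i; simp [matAct_apply, Finset.sum_add_distrib]
      map_smul' c a := by ext v i; simp [matAct_apply, Finset.smul_sum] }
    (by
      ext v i
      simp only [LinearMap.coe_mk, AddHom.coe_mk, matAct_apply, one_apply_eq_self]
      rw [Finset.sum_eq_single i (fun j _ hj => by simp [hj.symm]) (by simp)]
      simp)
    fun a b => by
      ext v i
      simp only [LinearMap.coe_mk, AddHom.coe_mk, mul_apply_eq_comp, matAct_apply,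
        Matrix.mul_apply, map_sum, map_mul, _root_.sum_apply]
      exact Finset.sum_comm

theorem coe_matActHom : ⇑(matActHom (n := n) π) = matAct π :=
  rfl

theorem aeval_matAct (a : Matrix (Fin n) (Fin n) A) (p : Polynomial ℝ) :
    Polynomial.aeval (matAct π a) p = matAct π (Polynomial.aeval a p) :=
  Polynomial.aeval_algHom_apply ((matActHom π).restrictScalars ℝ) a p

theorem star_matAct [CompleteSpace E] [StarRing A] (hπ : ∀ x, π (star x) = star (π x))
    (a : Matrix (Fin n) (Fin n) A) : star (matAct π a) = matAct π (star a) := by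
  symm
  rw [ContinuousLinearMap.star_eq_adjoint, ContinuousLinearMap.eq_adjoint_iff]
  intro v w
  simp only [PiLp.inner_apply, matAct_apply, sum_inner, inner_sum, Matrix.star_apply, hπ,
    ContinuousLinearMap.star_eq_adjoint, ContinuousLinearMap.adjoint_inner_left]
  exact Finset.sum_comm

theorem norm_matAct_le (a : Matrix (Fin n) (Fin n) A) :
    ‖matAct π a‖ ≤ ∑ i, ∑ j, ‖π (a i j)‖ := by
  refine ContinuousLinearMap.opNorm_le_bound _ (by positivity) fun v => ?_
  calc ‖matAct π a v‖ ≤ ∑ i, ‖∑ j, π (a i j) (v j)‖ := by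
        simpa only [matAct_apply] using norm_piLp_two_le_sum (matAct π a v)
    _ ≤ ∑ i, ∑ j, ‖π (a i j)‖ * ‖v‖ := by
        refine Finset.sum_le_sum fun i _ => norm_sum_le_of_le _ fun j _ => ?_
        exact (π (a i j)).le_opNorm_of_le (PiLp.norm_apply_le v j)
    _ = (∑ i, ∑ j, ‖π (a i j)‖) * ‖v‖ := by simp only [Finset.sum_mul]

end MatrixAction

section FunctionalCalculus

variable {A : Type*} [CStarAlgebra A] {g : ℝ → ℝ}

theorem cfc_cfcAbs (hg : ContinuousOn g (Set.Ici 0)) (x : A) :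
    cfc g (cfcAbs x) = cfc (fun t => g (√t)) (star x * x) := by
  refine (cfc_comp' g Real.sqrt (star x * x) (hg.mono ?_)).symm
  rintro _ ⟨t, -, rfl⟩
  exact Real.sqrt_nonneg t

theorem spectrum_star_mul_self_subset_Icc (x : A) :
    spectrum ℝ (star x * x) ⊆ Set.Icc 0 ‖star x * x‖ := fun t ht =>
  ⟨spectrum_star_mul_self_nonneg t ht,
    (Real.le_norm_self t).trans <| by
      simpa only [id, cfc_id ℝ (star x * x)] using
        norm_apply_le_norm_cfc (id : ℝ → ℝ) (star x * x) ht⟩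

theorem norm_cfc_cfcAbs_sub_aeval_le (hg : ContinuousOn g (Set.Ici 0)) {p : Polynomial ℝ}
    {C ε : ℝ} (hε : 0 ≤ ε) (hp : ∀ t ∈ Set.Icc 0 C, |p.eval t - g (√t)| ≤ ε) {x : A}
    (hx : ‖star x * x‖ ≤ C) :
    ‖cfc g (cfcAbs x) - Polynomial.aeval (star x * x) p‖ ≤ ε := by
  have hg' : Continuous fun t => g (√t) :=
    hg.comp_continuous Real.continuous_sqrt Real.sqrt_nonneg
  rw [cfc_cfcAbs hg, ← cfc_polynomial p (star x * x),
    ← cfc_sub _ _ (star x * x) hg'.continuousOn]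
  refine norm_cfc_le hε fun t ht => ?_
  rw [norm_sub_rev]
  exact hp t (Set.Icc_subset_Icc_right hx (spectrum_star_mul_self_subset_Icc x ht))

end FunctionalCalculus

namespace GNSRep

variable {G : Type*} [Group G] {n : ℕ}

theorem exists_norm_cfc_cfcAbs_matAct_sub_le {g : ℝ → ℝ} (hg : ContinuousOn g (Set.Ici 0))
    (a : Matrix (Fin n) (Fin n) (MonoidAlgebra ℂ G)) {ε : ℝ} (hε : 0 < ε) :
    ∃ c : Matrix (Fin n) (Fin n) (MonoidAlgebra ℂ G), ∀ {φ : G → ℂ} (R : GNSRep G φ),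
      ‖cfc g (cfcAbs (matAct R.π a)) - matAct R.π c‖ ≤ ε := by
  have star_mul_self {φ : G → ℂ} (R : GNSRep G φ) :
      star (matAct R.π a) * matAct R.π a = matAct R.π (star a * a) := by
    rw [star_matAct R.π R.π_star, ← coe_matActHom, map_mul]
  let C : ℝ := ∑ i, ∑ j, ((star a * a) i j).coeff.sum fun _ c => ‖c‖
  have norm_le {φ : G → ℂ} (R : GNSRep G φ) : ‖matAct R.π (star a * a)‖ ≤ C :=
    (norm_matAct_le R.π _).trans <|
      Finset.sum_le_sum fun i _ => Finset.sum_le_sum fun j _ => R.norm_π_le _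
  obtain ⟨p, hp⟩ := exists_polynomial_near_of_continuousOn 0 C (fun t => g (√t))
    (hg.comp_continuous Real.continuous_sqrt Real.sqrt_nonneg).continuousOn ε hε
  refine ⟨Polynomial.aeval (star a * a) p, fun R => ?_⟩
  rw [← aeval_matAct, ← star_mul_self]
  exact norm_cfc_cfcAbs_sub_aeval_le hg hε.le (fun t ht => (hp t ht).le)
    ((star_mul_self R).symm ▸ norm_le R)

section Trace

variable {φ : G → ℂ} (R : GNSRep G φ)

/-- The functional `φ ⊗ Trₙ`, written as `S ↦ ∑ᵢ ⟨ξᵢ, S ξᵢ⟩` on all bounded operators of `Hⁿ`. -/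
def trace : ((PiLp 2 fun _ : Fin n => R.H) →L[ℂ] (PiLp 2 fun _ : Fin n => R.H)) →ₗ[ℂ] ℂ where
  toFun S := ∑ i, inner ℂ (R.vec i) (S (R.vec i))
  map_add' S T := by simp [Finset.sum_add_distrib]
  map_smul' c S := by simp [Finset.mul_sum]

theorem trace_apply (S : (PiLp 2 fun _ : Fin n => R.H) →L[ℂ] (PiLp 2 fun _ : Fin n => R.H)) :
    R.trace S = ∑ i, inner ℂ (R.vec i) (S (R.vec i)) :=
  rfl

theorem vec_apply (i j : Fin n) : R.vec i j = if j = i then R.ξ else 0 :=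
  Pi.single_apply i R.ξ j

theorem inner_vec_left (i : Fin n) (v : PiLp 2 fun _ : Fin n => R.H) :
    inner ℂ (R.vec i) v = inner ℂ R.ξ (v i) := by
  rw [PiLp.inner_apply, Finset.sum_eq_single i (fun j _ hj => by simp [vec_apply, hj]) (by simp),
    vec_apply, if_pos rfl]

theorem norm_vec (i : Fin n) : ‖R.vec i‖ = ‖R.ξ‖ :=
  PiLp.norm_single 2 (fun _ : Fin n => R.H) i R.ξ

theorem trace_matAct (c : Matrix (Fin n) (Fin n) (MonoidAlgebra ℂ G)) :
    R.trace (matAct R.π c) = groupAlgebraExtend φ c.trace := by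
  simp [trace_apply, inner_vec_left, matAct_apply, vec_apply, apply_ite, Matrix.trace, R.inner_π]

theorem norm_trace_le (S : (PiLp 2 fun _ : Fin n => R.H) →L[ℂ] (PiLp 2 fun _ : Fin n => R.H)) :
    ‖R.trace S‖ ≤ n * (‖φ 1‖ * ‖S‖) := by
  have h (i : Fin n) : ‖inner ℂ (R.vec i) (S (R.vec i))‖ ≤ ‖φ 1‖ * ‖S‖ :=
    calc ‖inner ℂ (R.vec i) (S (R.vec i))‖ ≤ ‖R.vec i‖ * (‖S‖ * ‖R.vec i‖) :=
          (norm_inner_le_norm _ _).trans (by gcongr; exact S.le_opNorm _)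
      _ = ‖φ 1‖ * ‖S‖ := by rw [norm_vec, ← R.norm_ξ_sq]; ring
  simpa [trace_apply] using norm_sum_le_of_le Finset.univ fun i _ => h i

end Trace

section Family

variable {X : Type*} [TopologicalSpace X] {φ : X → G → ℂ}

theorem continuous_trace_cfc_cfcAbs (hφ : Continuous φ) (R : ∀ x, GNSRep G (φ x)) {g : ℝ → ℝ}
    (hg : ContinuousOn g (Set.Ici 0)) (a : Matrix (Fin n) (Fin n) (MonoidAlgebra ℂ G)) :
    Continuous fun x => (R x).trace (cfc g (cfcAbs (matAct (R x).π a))) := by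
  refine continuous_of_locally_uniform_approx_of_continuousAt fun x₀ u hu => ?_
  obtain ⟨δ, hδ, hδu⟩ := Metric.mem_uniformity_dist.1 hu
  let M : ℝ := ‖φ x₀ 1‖ + 1
  have locally_bounded : ∀ᶠ x in 𝓝 x₀, ‖φ x 1‖ < M :=
    ((continuous_apply 1).comp hφ).norm.continuousAt.eventually_lt_const (lt_add_one _)
  obtain ⟨ε, hε, hεδ⟩ := exists_pos_mul_lt hδ (n * M)
  obtain ⟨c, hc⟩ := exists_norm_cfc_cfcAbs_matAct_sub_le hg a hε
  refine ⟨_, locally_bounded, fun x => groupAlgebraExtend (φ x) c.trace,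
    ((continuous_groupAlgebraExtend _).comp hφ).continuousAt, fun x hx => hδu ?_⟩
  calc dist ((R x).trace (cfc g (cfcAbs (matAct (R x).π a)))) (groupAlgebraExtend (φ x) c.trace)
      = ‖(R x).trace (cfc g (cfcAbs (matAct (R x).π a)) - matAct (R x).π c)‖ := by
        rw [map_sub, trace_matAct, dist_eq_norm]
    _ ≤ n * (‖φ x 1‖ * ‖cfc g (cfcAbs (matAct (R x).π a)) - matAct (R x).π c‖) :=
        (R x).norm_trace_le _
    _ ≤ n * (M * ε) := by
        have hx : ‖φ x 1‖ < M := hx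
        gcongr
        exact hc (R x)
    _ < δ := by rwa [← mul_assoc]

theorem upperSemicontinuous_lnPlusQ (hφ : Continuous φ) (R : ∀ x, GNSRep G (φ x))
    (a : Matrix (Fin n) (Fin n) (MonoidAlgebra ℂ G)) :
    UpperSemicontinuous fun x => (R x).lnPlusQ a :=
  upperSemicontinuous_biInf fun _ hg => Continuous.upperSemicontinuous <|
    continuous_coe_real_ereal.comp <|
      Complex.continuous_re.comp (continuous_trace_cfc_cfcAbs hφ R hg.1 a)

end Family

theorem isClosed_setOf_forall_lnPlusQ_nonneg [Small.{0} G]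
    (a : Matrix (Fin n) (Fin n) (MonoidAlgebra ℂ G)) :
    IsClosed {φ : {φ : G → ℂ // IsPosType φ} | ∀ R : GNSRep G φ.1, 0 ≤ R.lnPlusQ a} := by
  classical
  refine isClosed_of_closure_subset fun φ hφ R => ?_
  -- Passing through `R` lets one choice of representations settle every representation of `φ`.
  let S : ∀ ψ : {φ : G → ℂ // IsPosType φ}, GNSRep G ψ.1 :=
    Function.update (fun ψ => ψ.2.nonempty_gnsRep.some) φ R
  have closed : IsClosed ((fun ψ => (S ψ).lnPlusQ a) ⁻¹' Set.Ici 0) :=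
    (upperSemicontinuous_lnPlusQ continuous_subtype_val S a).isClosed_preimage 0
  have hS : 0 ≤ (S φ).lnPlusQ a := by
    refine closure_minimal ?_ closed hφ
    exact fun ψ hψ => hψ (S ψ)
  rwa [show S φ = R from Function.update_self ..] at hS

end GNSRep

theorem stmt6_general {G : Type*} [Group G] [Small.{0} G] :
    IsClosed {φ : {φ : G → ℂ // IsPosType φ} | SatisfiesLueck φ.1} := by
  simp only [SatisfiesLueck, Set.ofPred_forall]
  exact isClosed_iInter fun n => isClosed_iInter fun _ => isClosed_iInter fun a =>
    isClosed_iInter fun _ => by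
      simpa only [Set.ofPred_forall] using GNSRep.isClosed_setOf_forall_lnPlusQ_nonneg a

/-- for a countable group `G`, the set `Λ_G` of traces on `G` satisfying
Lück's condition is closed in the set of all traces on `G` for the topology of pointwise
convergence. -/
theorem stmt6 {G : Type*} [Group G] [Countable G] :
    IsClosed {φ : {φ : G → ℂ // IsGroupTrace φ} | SatisfiesLueck φ.1} :=
  stmt6_general.preimage (continuous_subtype_val.subtype_mk fun φ => φ.2.1)

end
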